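/- Let (w̃, m̃, H̃) solve the cell problem: for each x ∈ 𝕋^d and Λ ∈ ℝ^d, (1/2)|Λ+∇_y w̃(x,Λ,y)|² + V(x,y) = ln m̃(x,Λ,y) + H̃(x,Λ) and −div_y(m̃(Λ+∇_y w̃)) = 0 in 𝒴^d with ∫_{𝒴^d} m̃ dy = 1, m̃ > 0, where w̃, m̃, H̃ depend smoothly on (x,Λ). If d > 1, assume in addition that V is separable in y, i.e. V(x,y) = Σ_{i=1}^d V_i(x, y_i) for smooth V_i. Then H̃ is uniformly convex in Λ: there exists a constant C > 0, independent of x and Λ, such that for every ξ ∈ ℝ^d, Σ_{j,l} ξ_j (∂²H̃/∂Λ_j∂Λ_l)(x,Λ) ξ_l ≥ C|ξ|². Moreover, there exists a constant C' > 0 such that |∂²H̃/∂Λ_j∂Λ_l (x,Λ)| ≤ C' for all x ∈ 𝕋^d, Λ ∈ ℝ^d, and j,l ∈ {1,…,d}. -/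

import Mathlib

open MeasureTheory Filter Topology Function

noncomputable section

/-- The unit cell `𝒴^d = [0,1)^d`. -/
def cube (d : ℕ) : Set (Fin d → ℝ) := Set.univ.pi fun _ => Set.Ico (0 : ℝ) 1

/-- `ℤ^d`-periodicity of a function on `ℝ^d`; functions on the torus `𝕋^d`
(and `𝒴^d`-periodic functions) are identified with such functions. -/
def ZPer {d : ℕ} (f : (Fin d → ℝ) → ℝ) : Prop :=
  ∀ (x : Fin d → ℝ) (k : Fin d → ℤ), f (fun i => x i + (k i : ℝ)) = f x

/-- The `i`-th partial derivative. -/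
def pder {d : ℕ} (i : Fin d) (f : (Fin d → ℝ) → ℝ) (x : Fin d → ℝ) : ℝ :=
  fderiv ℝ f x (Pi.single i 1)

/-- `V : 𝕋^d × ℝ^d → ℝ` smooth, `𝒴^d`-periodic in the second variable
(and periodic in the first, i.e. defined on the torus). -/
def SmoothV {d : ℕ} (V : (Fin d → ℝ) → (Fin d → ℝ) → ℝ) : Prop :=
  ContDiff ℝ (⊤ : ℕ∞) (uncurry V) ∧ (∀ y, ZPer fun x => V x y) ∧ (∀ x, ZPer (V x))

/-- `sup_{(x,y) ∈ 𝕋^d × 𝒴^d} V (x,y)` (by periodicity, the sup over all of `ℝ^d × ℝ^d`). -/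
def supV {d : ℕ} (V : (Fin d → ℝ) → (Fin d → ℝ) → ℝ) : ℝ :=
  ⨆ q : (Fin d → ℝ) × (Fin d → ℝ), V q.1 q.2

/-- `inf_{(x,y) ∈ 𝕋^d × 𝒴^d} V (x,y)`. -/
def infV {d : ℕ} (V : (Fin d → ℝ) → (Fin d → ℝ) → ℝ) : ℝ :=
  ⨅ q : (Fin d → ℝ) × (Fin d → ℝ), V q.1 q.2

/-- `(w, m, H)` is a classical solution of the cell problem at `(x, Λ)`:
`|Λ+∇_y w|²/2 + V(x,y) = ln m + H`, `-div_y(m (Λ+∇_y w)) = 0` in `𝒴^d`, `∫_{𝒴^d} m = 1`. -/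
def CellSolAt {d : ℕ} (V : (Fin d → ℝ) → (Fin d → ℝ) → ℝ)
    (x Λ : Fin d → ℝ) (w m : (Fin d → ℝ) → ℝ) (H : ℝ) : Prop :=
  ContDiff ℝ 2 w ∧ ZPer w ∧ ContDiff ℝ 1 m ∧ ZPer m ∧ (∀ y, 0 < m y) ∧
  (∀ y, (∑ i, (Λ i + pder i w y) ^ 2) / 2 + V x y = Real.log (m y) + H) ∧
  (∀ y, (∑ i, pder i (fun z => m z * (Λ i + pder i w z)) y) = 0) ∧
  (∫ y in cube d, m y) = 1

/-- `V` is separable in `y`: `V(x,y) = Σ_i V_i(x, y_i)` with each `V_i` smooth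
(and periodic in the torus variable `x`). -/
def SeparableV {d : ℕ} (V : (Fin d → ℝ) → (Fin d → ℝ) → ℝ) : Prop :=
  ∃ Vi : Fin d → ((Fin d → ℝ) → ℝ → ℝ),
    (∀ i, ContDiff ℝ (⊤ : ℕ∞) (uncurry (Vi i))) ∧
    (∀ i t, ZPer fun x => Vi i x t) ∧
    ∀ x y, V x y = ∑ i, Vi i x (y i)

lemma exp_diff_sign (r r' : ℝ) : 0 ≤ (r' - r) * (Real.exp (2*r') - Real.exp (2*r)) := by
  rcases le_total r r' with h | h
  · exact mul_nonneg (by linarith) (by have := Real.exp_le_exp.2 (show 2*r ≤ 2*r' by linarith); linarith)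
  · exact mul_nonneg_of_nonpos_of_nonpos (by linarith)
      (by have := Real.exp_le_exp.2 (show 2*r' ≤ 2*r by linarith); linarith)

lemma abs_le_of_same_sign (a e k : ℝ) (hk : 0 ≤ k) (h : 0 ≤ a * e) : |a| ≤ |a + k * e| := by
  apply sq_le_sq.1
  nlinarith [mul_nonneg hk h, sq_nonneg (k*e)]

lemma exists_R : ∃ R : ℝ → ℝ → ℝ, ∀ c t, R c t + c^2 / 2 * Real.exp (2 * R c t) = t := by
  have : ∀ c t : ℝ, ∃ r, r + c^2/2 * Real.exp (2*r) = t := by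
    intro c t
    have hc : Continuous fun r : ℝ => r + c^2/2 * Real.exp (2*r) := by fun_prop
    refine mem_range_of_exists_le_of_exists_ge hc ⟨min 0 (t - c^2/2), ?_⟩ ⟨t, ?_⟩
    · have h1 := min_le_left 0 (t - c^2/2)
      have h2 := min_le_right 0 (t - c^2/2)
      have : Real.exp (2 * min 0 (t - c^2/2)) ≤ 1 := Real.exp_le_one_iff.2 (by linarith)
      nlinarith [sq_nonneg c]
    · have := Real.exp_pos (2*t)
      nlinarith [sq_nonneg c, mul_nonneg (sq_nonneg c) this.le]
  choose R hR using this
  exact ⟨R, hR⟩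

lemma R_est {R : ℝ → ℝ → ℝ} (hR : ∀ c t, R c t + c^2 / 2 * Real.exp (2 * R c t) = t)
    (c t c' t' : ℝ) : |R c' t' - R c t| ≤ |t' - t - (c'^2 - c^2)/2 * Real.exp (2 * R c t)| := by
  have := abs_le_of_same_sign (R c' t' - R c t) (Real.exp (2*R c' t') - Real.exp (2*R c t)) (c'^2/2)
    (by positivity) (exp_diff_sign _ _)
  refine this.trans (le_of_eq ?_)
  congr 1
  linear_combination hR c' t' - hR c t

lemma R_cont {R : ℝ → ℝ → ℝ} (hR : ∀ c t, R c t + c^2 / 2 * Real.exp (2 * R c t) = t) :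
    Continuous (fun q : ℝ × ℝ => R q.1 q.2) := by
  rw [continuous_iff_continuousAt]
  rintro ⟨c, t⟩
  refine tendsto_iff_norm_sub_tendsto_zero.2 ?_
  have hc : Continuous fun q : ℝ × ℝ => |q.2 - t - (q.1^2 - c^2)/2 * Real.exp (2 * R c t)| := by fun_prop
  have h0 := hc.tendsto (c, t)
  simp only [sub_self, zero_div, zero_mul, abs_zero] at h0
  exact squeeze_zero (fun _ => norm_nonneg _) (fun q => R_est hR c t q.1 q.2) h0

lemma R_mono {R : ℝ → ℝ → ℝ} (hR : ∀ c t, R c t + c^2 / 2 * Real.exp (2 * R c t) = t) (c : ℝ) :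
    StrictMono (R c) := by
  intro t t' h
  by_contra hh
  push Not at hh
  have : Real.exp (2 * R c t') ≤ Real.exp (2 * R c t) := Real.exp_le_exp.2 (by linarith)
  nlinarith [hR c t, hR c t', mul_le_mul_of_nonneg_left this (sq_nonneg c)]

lemma R_contDiff {R : ℝ → ℝ → ℝ} (hR : ∀ c t, R c t + c^2 / 2 * Real.exp (2 * R c t) = t) (c : ℝ) :
    ContDiff ℝ 1 (R c) := by
  have hcont : Continuous (R c) := (R_cont hR).comp (Continuous.prodMk_right c)
  have hd : ∀ t, HasDerivAt (R c) (1 + c^2/2 * (Real.exp (2 * R c t) * 2))⁻¹ t := by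
    intro t
    have h1 : HasDerivAt (fun r : ℝ => r + c^2/2 * Real.exp (2*r))
        (1 + c^2/2 * (Real.exp (2 * R c t) * 2)) (R c t) := by
      have := ((hasDerivAt_id (R c t)).const_mul 2).exp.const_mul (c^2/2)
      simpa using (hasDerivAt_id (R c t)).fun_add this
    exact HasDerivAt.of_local_left_inverse hcont.continuousAt h1 (by positivity)
      (Eventually.of_forall fun t => hR c t)
  rw [contDiff_one_iff_deriv]
  refine ⟨fun t => (hd t).differentiableAt, ?_⟩
  rw [show deriv (R c) = fun t => (1 + c^2/2 * (Real.exp (2 * R c t) * 2))⁻¹ from funext fun t => (hd t).deriv]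
  exact Continuous.inv₀ (by fun_prop) (fun t => by positivity)

lemma R_bound {c r M s : ℝ} (h : r + c^2 / 2 * Real.exp (2 * r) = s + c^2/2) (hs : |s| ≤ 2*M) :
    |r| ≤ 2 * M := by
  have := abs_le_of_same_sign r (Real.exp (2*r) - 1) (c^2/2) (by positivity)
    (by simpa using exp_diff_sign 0 r)
  refine this.trans (le_trans (le_of_eq ?_) hs)
  congr 1
  linear_combination h

lemma sol1 (v : ℝ → ℝ) (hv : ContDiff ℝ 1 v) (hper : ∀ (t : ℝ) (k : ℤ), v (t + k) = v t)
    (M : ℝ) (hM : ∀ t, |v t| ≤ M) (lam : ℝ) :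
    ∃ (c H : ℝ) (r : ℝ → ℝ), ContDiff ℝ 1 r ∧ (∀ (t : ℝ) (k : ℤ), r (t + k) = r t) ∧
      (∀ t, r t + c^2/2 * Real.exp (2 * r t) = H - v t) ∧
      (∫ t in (0:ℝ)..1, Real.exp (- r t)) = 1 ∧ (∫ t in (0:ℝ)..1, c * Real.exp (r t)) = lam ∧
      (∀ t, |r t| ≤ 2 * M) ∧ ∀ t, (c * Real.exp (r t) - c)^2 ≤ 8 * M := by
  obtain ⟨R, hR⟩ := exists_R
  have hRc := R_cont hR
  have hvc := hv.continuous
  have hM0 : ∀ t, - M ≤ v t ∧ v t ≤ M := fun t => abs_le.1 (hM t)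
  have hR0 : ∀ c, R c (c^2/2) = 0 := by
    intro c
    have h := hR c (c^2/2)
    have hb := R_bound (M := 0) (s := 0) (c := c) (r := R c (c^2/2)) (by linarith) (by simp)
    simpa using hb
  set K : ℝ → ℝ → ℝ := fun c H => ∫ t in (0:ℝ)..1, Real.exp (- R c (H - v t)) with hK
  have hint : Continuous (fun q : (ℝ × ℝ) × ℝ => Real.exp (- R q.1.1 (q.1.2 - v q.2))) := by
    have : Continuous (fun q : (ℝ × ℝ) × ℝ => R q.1.1 (q.1.2 - v q.2)) :=
      hRc.comp (f := fun q : (ℝ × ℝ) × ℝ => (q.1.1, q.1.2 - v q.2)) (by fun_prop)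
    fun_prop
  have hKc : Continuous (fun q : ℝ × ℝ => K q.1 q.2) :=
    intervalIntegral.continuous_parametric_intervalIntegral_of_continuous' (f := fun (q : ℝ × ℝ) t => Real.exp (- R q.1 (q.2 - v t))) hint 0 1
  have hci : ∀ c H, Continuous fun t => Real.exp (- R c (H - v t)) := fun c H =>
    hint.comp (Continuous.prodMk_right (c, H))
  have hKanti : ∀ c, StrictAnti (K c) := by
    intro c a b hab
    refine intervalIntegral.integral_lt_integral_of_continuousOn_of_le_of_exists_lt zero_lt_one
      (hci _ _).continuousOn (hci _ _).continuousOn (fun t _ => ?_) ⟨0, by simp, ?_⟩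
    · exact Real.exp_le_exp.2 (neg_le_neg ((R_mono hR c).monotone (by linarith)))
    · exact Real.exp_lt_exp.2 (neg_lt_neg ((R_mono hR c) (by linarith)))
  have hex : ∀ c, ∃ s ∈ Set.Icc (-M) M, K c (c^2/2 + s) = 1 := by
    intro c
    have hMM : -M ≤ M := by linarith [hM0 0]
    have hKc' : Continuous fun s => K c (c^2/2 + s) :=
      hKc.comp (f := fun s : ℝ => (c, c^2/2 + s)) (by fun_prop)
    have := intermediate_value_Icc' hMM hKc'.continuousOn
    apply this
    constructor
    · calc K c (c^2/2 + M) ≤ ∫ t in (0:ℝ)..1, (1:ℝ) := by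
            refine intervalIntegral.integral_mono zero_le_one ((hci _ _).intervalIntegrable _ _) (by simp) ?_
            intro t
            refine Real.exp_le_one_iff.2 (neg_nonpos.2 ?_)
            rw [← hR0 c]
            exact (R_mono hR c).monotone (by linarith [hM0 t])
        _ = 1 := by simp
    · calc 1 = ∫ t in (0:ℝ)..1, (1:ℝ) := by simp
        _ ≤ K c (c^2/2 + -M) := by
            refine intervalIntegral.integral_mono zero_le_one (by simp) ((hci _ _).intervalIntegrable _ _) ?_
            intro t
            refine Real.one_le_exp (neg_nonneg.2 ?_)
            rw [← hR0 c]
            exact (R_mono hR c).monotone (by linarith [hM0 t])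
  choose s hs hsK using hex
  set h : ℝ → ℝ := fun c => c^2/2 + s c with hh
  have hcont : Continuous h := by
    rw [continuous_iff_continuousAt]
    intro c
    rw [ContinuousAt, tendsto_order]
    have hKa : ∀ a, Continuous fun c => K c a := fun a => hKc.comp (Continuous.prodMk_left a)
    constructor
    · intro a ha
      have : 1 < K c a := by rw [← hsK c]; exact hKanti c ha
      filter_upwards [(hKa a).continuousAt.eventually (lt_mem_nhds this)] with c' hc'
      rw [← hsK c'] at hc'
      exact (hKanti c').lt_iff_gt.1 hc'
    · intro a ha
      have : K c a < 1 := by rw [← hsK c]; exact hKanti c ha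
      filter_upwards [(hKa a).continuousAt.eventually (gt_mem_nhds this)] with c' hc'
      rw [← hsK c'] at hc'
      exact (hKanti c').lt_iff_gt.1 hc'
  have hrb : ∀ c t, |R c (h c - v t)| ≤ 2 * M := by
    intro c t
    refine R_bound (c := c) (s := s c - v t) (by rw [hR]; simp only [hh]; ring) ?_
    have := hs c
    rw [abs_le]; constructor <;> linarith [this.1, this.2, hM0 t]
  have hint2 : Continuous (fun q : ℝ × ℝ => q.1 * Real.exp (R q.1 (h q.1 - v q.2))) := by
    have : Continuous (fun q : ℝ × ℝ => R q.1 (h q.1 - v q.2)) :=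
      hRc.comp (f := fun q : ℝ × ℝ => (q.1, h q.1 - v q.2)) (by fun_prop)
    fun_prop
  have hLc : Continuous fun c => ∫ t in (0:ℝ)..1, c * Real.exp (R c (h c - v t)) :=
    intervalIntegral.continuous_parametric_intervalIntegral_of_continuous' (f := fun (c : ℝ) t => c * Real.exp (R c (h c - v t))) hint2 0 1
  have hci2 : ∀ c, Continuous fun t => c * Real.exp (R c (h c - v t)) := fun c =>
    hint2.comp (Continuous.prodMk_right c)
  have hel : ∀ c t, Real.exp (-(2*M)) ≤ Real.exp (R c (h c - v t)) := fun c t =>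
    Real.exp_le_exp.2 (abs_le.1 (hrb c t)).1
  have hE : 0 < Real.exp (-(2*M)) := Real.exp_pos _
  obtain ⟨c, hc⟩ : ∃ c, (∫ t in (0:ℝ)..1, c * Real.exp (R c (h c - v t))) = lam := by
    refine mem_range_of_exists_le_of_exists_ge hLc ⟨-|lam| / Real.exp (-(2*M)), ?_⟩ ⟨|lam| / Real.exp (-(2*M)), ?_⟩
    · set c := -|lam| / Real.exp (-(2*M)) with hcdef
      have hc0 : c ≤ 0 := div_nonpos_of_nonpos_of_nonneg (by simp) hE.le
      calc _ ≤ ∫ t in (0:ℝ)..1, c * Real.exp (-(2*M)) := by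
            refine intervalIntegral.integral_mono zero_le_one ((hci2 _).intervalIntegrable _ _) (by simp) ?_
            intro t
            exact mul_le_mul_of_nonpos_left (hel c t) hc0
        _ = -|lam| := by simp [hcdef]
        _ ≤ lam := neg_abs_le _
    · set c := |lam| / Real.exp (-(2*M)) with hcdef
      have hc0 : 0 ≤ c := by positivity
      calc lam ≤ |lam| := le_abs_self _
        _ = ∫ t in (0:ℝ)..1, c * Real.exp (-(2*M)) := by simp [hcdef]
        _ ≤ _ := by
            refine intervalIntegral.integral_mono zero_le_one (by simp) ((hci2 _).intervalIntegrable _ _) ?_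
            intro t
            exact mul_le_mul_of_nonneg_left (hel c t) hc0
  refine ⟨c, h c, fun t => R c (h c - v t), (R_contDiff hR c).comp (contDiff_const.sub hv), ?_, ?_, hsK c, hc, hrb c, ?_⟩
  · intro t k; simp only [hper]
  · intro t; exact hR _ _
  · intro t
    have h1 := hR c (h c - v t)
    have h2 := abs_le.1 (hrb c t)
    have h3 : h c = c^2/2 + s c := rfl
    have hs' := hs c
    have h4 := hM0 t
    set r := R c (h c - v t)
    have h5 : Real.exp (2 * r) = Real.exp r ^ 2 := by rw [← Real.exp_nat_mul]; norm_num
    rw [h5] at h1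
    have h6 := Real.exp_pos r
    set e := Real.exp r
    rcases le_total e 1 with he | he
    · have : 0 ≤ c^2 * (e * (1 - e)) := by have : 0 ≤ 1 - e := by linarith
                                           positivity
      nlinarith [hs'.1, hs'.2]
    · have : 0 ≤ c^2 * (e - 1) := by have : 0 ≤ e - 1 := by linarith
                                     positivity
      nlinarith [hs'.1, hs'.2]

lemma cube_ae_Icc (d : ℕ) : (cube d) =ᵐ[volume] Set.Icc (0 : Fin d → ℝ) 1 := by
  have := Measure.univ_pi_Ico_ae_eq_Icc (μ := fun _ : Fin d => (volume : Measure ℝ)) (f := 0) (g := 1)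
  simpa [cube, volume_pi] using this

lemma cube_integrable {d : ℕ} {f : (Fin d → ℝ) → ℝ} (hf : Continuous f) :
    IntegrableOn f (cube d) :=
  ((hf.continuousOn.integrableOn_compact isCompact_Icc).congr_set_ae (cube_ae_Icc d))

lemma cube_one (d : ℕ) (a : ℝ) : (∫ _ in cube d, a) = a := by
  rw [setIntegral_congr_set (cube_ae_Icc d)]
  simp [Measure.real, Real.volume_Icc_pi]

lemma pder_cont {d : ℕ} {f : (Fin d → ℝ) → ℝ} (hf : ContDiff ℝ 1 f) (i : Fin d) :
    Continuous (pder i f) :=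
  (hf.continuous_fderiv (by norm_num)).clm_apply continuous_const

lemma pder_contDiff {d : ℕ} {f : (Fin d → ℝ) → ℝ} (hf : ContDiff ℝ 2 f) (i : Fin d) :
    ContDiff ℝ 1 (pder i f) :=
  (hf.fderiv_right (m := 1) (by norm_num)).clm_apply contDiff_const

lemma pder_per {d : ℕ} {f : (Fin d → ℝ) → ℝ} (hf : ZPer f) (i : Fin d) :
    ZPer (pder i f) := by
  intro x k
  have : f = fun z => f (z + fun i => (k i : ℝ)) := by
    ext z; exact (hf z k).symm
  unfold pder
  conv_rhs => rw [this, fderiv_comp_add_right]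
  rfl

lemma int_pder_zero {d : ℕ} {F : (Fin d → ℝ) → ℝ} (hF : ContDiff ℝ 1 F) (hper : ZPer F)
    (i : Fin d) : (∫ y in cube d, pder i F y) = 0 := by
  obtain _ | n := d
  · exact i.elim0
  rw [setIntegral_congr_set (cube_ae_Icc _)]
  have hd := hF.differentiable (by norm_num)
  have key := integral_divergence_of_hasFDerivAt_off_countable' (n := n) (E := ℝ) 0 1 zero_le_one
    (fun j => if j = i then F else 0) (fun j => if j = i then fderiv ℝ F else 0) ∅ (by simp)
    (fun j => by
      by_cases h : j = i
      · simp only [h, if_true]; exact hF.continuous.continuousOn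
      · simp only [h, if_false]; exact continuous_zero.continuousOn)
    (fun x _ j => by
      by_cases h : j = i
      · simp only [h, if_true]; exact (hd x).hasFDerivAt
      · simp only [h, if_false]; exact hasFDerivAt_const _ _)
  have hsum : ∀ x, (∑ j, (if j = i then fderiv ℝ F else 0) x (Pi.single j 1)) = pder i F x := by
    intro x
    rw [Finset.sum_eq_single i]
    · simp [pder]
    · intro j _ hj; simp [hj]
    · simp
  simp only [hsum] at key
  rw [key ((pder_cont hF i).continuousOn.integrableOn_compact isCompact_Icc)]
  apply Finset.sum_eq_zero
  intro j _
  by_cases h : j = i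
  · subst h
    simp only [if_true]
    rw [sub_eq_zero]
    congr 1
    ext z
    have := hper (j.insertNth ((0 : Fin (n+1) → ℝ) j) z) (Pi.single j 1)
    rw [← this]
    congr 1
    ext l
    refine j.succAboveCases ?_ (fun l => ?_) l
    · simp
    · simp
  · simp [h]

/-- the energy of a test function -/
def ffun {d : ℕ} (V : (Fin d → ℝ) → (Fin d → ℝ) → ℝ) (x Λ : Fin d → ℝ)
    (φ : (Fin d → ℝ) → ℝ) (y : Fin d → ℝ) : ℝ :=
  (∑ i, (Λ i + pder i φ y) ^ 2) / 2 + V x y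

lemma sol_m {d : ℕ} {V : (Fin d → ℝ) → (Fin d → ℝ) → ℝ} {x Λ : Fin d → ℝ}
    {w m : (Fin d → ℝ) → ℝ} {H : ℝ} (hs : CellSolAt V x Λ w m H) (y : Fin d → ℝ) :
    Real.exp (ffun V x Λ w y) = Real.exp H * m y := by
  obtain ⟨-, -, -, -, hm, he, -, -⟩ := hs
  rw [ffun, he, Real.exp_add, Real.exp_log (hm y), mul_comm]

lemma pder_mul {d : ℕ} {f g : (Fin d → ℝ) → ℝ} {y : Fin d → ℝ} (hf : DifferentiableAt ℝ f y)
    (hg : DifferentiableAt ℝ g y) (i : Fin d) :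
    pder i (fun z => f z * g z) y = f y * pder i g y + g y * pder i f y := by
  unfold pder
  rw [fderiv_fun_mul hf hg]
  simp

lemma sol_orth {d : ℕ} {V : (Fin d → ℝ) → (Fin d → ℝ) → ℝ} {x Λ : Fin d → ℝ}
    {w m : (Fin d → ℝ) → ℝ} {H : ℝ} (hs : CellSolAt V x Λ w m H)
    {φ : (Fin d → ℝ) → ℝ} (hφ : ContDiff ℝ 1 φ) (hφp : ZPer φ) :
    (∫ y in cube d, ∑ i, m y * (Λ i + pder i w y) * pder i φ y) = 0 := by
  obtain ⟨hw, hwp, hm, hmp, -, -, hdiv, -⟩ := hs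
  have hF : ∀ i, ContDiff ℝ 1 fun z => m z * (Λ i + pder i w z) := fun i =>
    hm.mul (contDiff_const.add (pder_contDiff hw i))
  have hFp : ∀ i, ZPer fun z => m z * (Λ i + pder i w z) := fun i z k => by
    have h1 := hmp z k
    have h2 := pder_per hwp i z k
    simp only at h1 h2 ⊢
    rw [h1, h2]
  have h1 : ∀ y, (∑ i, m y * (Λ i + pder i w y) * pder i φ y)
      = ∑ i, pder i (fun z => (m z * (Λ i + pder i w z)) * φ z) y := by
    intro y
    have : ∀ i, pder i (fun z => (m z * (Λ i + pder i w z)) * φ z) y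
       = m y * (Λ i + pder i w y) * pder i φ y + φ y * pder i (fun z => m z * (Λ i + pder i w z)) y := by
      intro i
      exact pder_mul ((hF i).differentiable (by norm_num) y) (hφ.differentiable (by norm_num) y) i
    simp only [this, Finset.sum_add_distrib, ← Finset.mul_sum, hdiv, mul_zero, add_zero]
  simp only [h1]
  rw [integral_finsetSum]
  · apply Finset.sum_eq_zero
    intro i _
    refine int_pder_zero ((hF i).mul hφ) ?_ i
    intro z k
    have h1 := hFp i z k
    have h2 := hφp z k
    simp only at h1 h2 ⊢
    rw [h1, h2]
  · intro i _
    exact cube_integrable (pder_cont ((hF i).mul hφ) i)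

/-- mean flux -/
def qvec {d : ℕ} (Λ : Fin d → ℝ) (w m : (Fin d → ℝ) → ℝ) (i : Fin d) : ℝ :=
  ∫ y in cube d, m y * (Λ i + pder i w y)

lemma ffun_cont {d : ℕ} {V : (Fin d → ℝ) → (Fin d → ℝ) → ℝ} {x Λ : Fin d → ℝ}
    {φ : (Fin d → ℝ) → ℝ} (hV : Continuous (V x)) (hφ : ContDiff ℝ 1 φ) :
    Continuous (ffun V x Λ φ) := by
  have := fun i => pder_cont hφ i
  unfold ffun
  fun_prop

/-- Jensen-type lower bound. -/
lemma lower_gen {d : ℕ} {V : (Fin d → ℝ) → (Fin d → ℝ) → ℝ} {x Λ : Fin d → ℝ}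
    {w m : (Fin d → ℝ) → ℝ} {H : ℝ} (hV : Continuous (V x)) (hs : CellSolAt V x Λ w m H)
    {φ : (Fin d → ℝ) → ℝ} (hφ : ContDiff ℝ 2 φ) (hφp : ZPer φ) (Λ' : Fin d → ℝ)
    (κ : ℝ) (hκ0 : 0 ≤ κ) (hκ : ∀ y, κ ≤ m y) :
    Real.exp (H + ((∑ i, qvec Λ w m i * (Λ' i - Λ i)) + κ / 2 * ∑ i, (Λ' i - Λ i)^2))
      ≤ ∫ y in cube d, Real.exp (ffun V x Λ' φ y) := by
  have hs' := hs
  obtain ⟨hw, hwp, hm, hmp, hmpos, he, hdiv, hone⟩ := hs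
  have hw1 : ContDiff ℝ 1 w := hw.of_le (by norm_num)
  have hφ1 : ContDiff ℝ 1 φ := hφ.of_le (by norm_num)
  have cw := fun i => pder_cont hw1 i
  have cφ := fun i => pder_cont hφ1 i
  have cf := ffun_cont (Λ := Λ) hV hw1
  have cf' := ffun_cont (Λ := Λ') hV hφ1
  have cm := hm.continuous
  set b := (∑ i, qvec Λ w m i * (Λ' i - Λ i)) + κ / 2 * ∑ i, (Λ' i - Λ i)^2 with hb
  -- the linear integrals
  have hD : ContDiff ℝ 1 (fun y => φ y - w y) := hφ1.sub hw1
  have hDp : ZPer (fun y => φ y - w y) := fun z k => by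
    have h1 := hφp z k
    have h2 := hwp z k
    simp only at h1 h2 ⊢
    rw [h1, h2]
  have hDd : ∀ i y, pder i (fun y => φ y - w y) y = pder i φ y - pder i w y := by
    intro i y
    unfold pder
    rw [fderiv_fun_sub (hφ1.differentiable (by norm_num) y) (hw1.differentiable (by norm_num) y)]
    simp
  have hI1 : (∫ y in cube d, ∑ i, m y * (Λ i + pder i w y) * ((Λ' i + pder i φ y) - (Λ i + pder i w y)))
      = ∑ i, qvec Λ w m i * (Λ' i - Λ i) := by
    have e1 : ∀ y, (∑ i, m y * (Λ i + pder i w y) * ((Λ' i + pder i φ y) - (Λ i + pder i w y)))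
      = (∑ i, m y * (Λ i + pder i w y) * pder i (fun y => φ y - w y) y)
        + ∑ i, m y * (Λ i + pder i w y) * (Λ' i - Λ i) := by
      intro y
      rw [← Finset.sum_add_distrib]
      refine Finset.sum_congr rfl fun i _ => ?_
      rw [hDd]; ring
    simp only [e1]
    rw [integral_add, sol_orth hs' hD hDp, zero_add, integral_finsetSum]
    · simp only [integral_mul_const, qvec]
    · intro i _; exact cube_integrable (by fun_prop)
    · apply cube_integrable; have := fun i => pder_cont hD i; fun_prop
    · exact cube_integrable (by fun_prop)
  have hI2 : (∫ y in cube d, ∑ i, (2 * (Λ' i - Λ i) * ((Λ' i + pder i φ y) - (Λ i + pder i w y)) - (Λ' i - Λ i)^2))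
      = ∑ i, (Λ' i - Λ i)^2 := by
    rw [integral_finsetSum]
    · refine Finset.sum_congr rfl fun i _ => ?_
      have e1 : ∀ y, 2 * (Λ' i - Λ i) * ((Λ' i + pder i φ y) - (Λ i + pder i w y)) - (Λ' i - Λ i)^2
        = 2 * (Λ' i - Λ i) * pder i (fun y => φ y - w y) y + (Λ' i - Λ i)^2 := by
        intro y; rw [hDd]; ring
      simp only [e1]
      rw [integral_add, integral_const_mul, int_pder_zero hD hDp, cube_one]
      · ring
      · exact cube_integrable ((pder_cont hD i).const_mul _)
      · exact cube_integrable continuous_const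
    · intro i _; exact cube_integrable (by fun_prop)
  have hpt : ∀ y, Real.exp (H + b) * (m y * (1 - b)
      + (∑ i, m y * (Λ i + pder i w y) * ((Λ' i + pder i φ y) - (Λ i + pder i w y)))
      + κ/2 * ∑ i, (2 * (Λ' i - Λ i) * ((Λ' i + pder i φ y) - (Λ i + pder i w y)) - (Λ' i - Λ i)^2))
      ≤ Real.exp (ffun V x Λ' φ y) := by
    intro y
    have h1 : Real.exp (ffun V x Λ' φ y)
        = Real.exp (H + b) * (m y * Real.exp (ffun V x Λ' φ y - ffun V x Λ w y - b)) := by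
      rw [Real.exp_sub, Real.exp_sub, sol_m hs', Real.exp_add]
      have := (hmpos y).ne'
      field_simp
    rw [h1]
    refine mul_le_mul_of_nonneg_left ?_ (Real.exp_pos _).le
    have h2 := Real.add_one_le_exp (ffun V x Λ' φ y - ffun V x Λ w y - b)
    refine le_trans ?_ (mul_le_mul_of_nonneg_left h2 (hmpos y).le)
    have h3 : ffun V x Λ' φ y - ffun V x Λ w y
      = (∑ i, (Λ i + pder i w y) * ((Λ' i + pder i φ y) - (Λ i + pder i w y)))
        + (1/2) * ∑ i, ((Λ' i + pder i φ y) - (Λ i + pder i w y))^2 := by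
      unfold ffun
      rw [add_sub_add_right_eq_sub, ← sub_div, ← Finset.sum_sub_distrib, Finset.sum_div, Finset.mul_sum,
        ← Finset.sum_add_distrib]
      refine Finset.sum_congr rfl fun i _ => ?_
      ring
    rw [h3]
    have h4 : (∑ i, (2 * (Λ' i - Λ i) * ((Λ' i + pder i φ y) - (Λ i + pder i w y)) - (Λ' i - Λ i)^2))
       ≤ ∑ i, ((Λ' i + pder i φ y) - (Λ i + pder i w y))^2 := by
      refine Finset.sum_le_sum fun i _ => ?_
      nlinarith [sq_nonneg ((Λ' i + pder i φ y) - (Λ i + pder i w y) - (Λ' i - Λ i))]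
    have h5 : (∑ i, m y * (Λ i + pder i w y) * ((Λ' i + pder i φ y) - (Λ i + pder i w y)))
       = m y * ∑ i, (Λ i + pder i w y) * ((Λ' i + pder i φ y) - (Λ i + pder i w y)) := by
      rw [Finset.mul_sum]; exact Finset.sum_congr rfl fun i _ => by ring
    rw [h5]
    have h6 : 0 ≤ ∑ i, ((Λ' i + pder i φ y) - (Λ i + pder i w y))^2 :=
      Finset.sum_nonneg fun i _ => sq_nonneg _
    have h7 := mul_le_mul_of_nonneg_left h4 hκ0
    have h8 := mul_le_mul_of_nonneg_right (hκ y) h6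
    linarith
  have := integral_mono (μ := volume.restrict (cube d)) (cube_integrable (by fun_prop)) (cube_integrable (by fun_prop)) hpt
  refine le_trans (le_of_eq ?_) this
  rw [integral_const_mul, integral_add, integral_add, integral_const_mul, integral_mul_const, hI1, hI2, hone, hb]
  · ring
  · exact cube_integrable (by fun_prop)
  · exact cube_integrable (by fun_prop)
  · exact cube_integrable (by fun_prop)
  · exact cube_integrable (by fun_prop)

lemma sol_int {d : ℕ} {V : (Fin d → ℝ) → (Fin d → ℝ) → ℝ} {x Λ : Fin d → ℝ}
    {w m : (Fin d → ℝ) → ℝ} {H : ℝ} (hs : CellSolAt V x Λ w m H) :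
    (∫ y in cube d, Real.exp (ffun V x Λ w y)) = Real.exp H := by
  simp only [sol_m hs, integral_const_mul, hs.2.2.2.2.2.2.2, mul_one]

lemma lower_bd {d : ℕ} {V : (Fin d → ℝ) → (Fin d → ℝ) → ℝ} {x Λ Λ' : Fin d → ℝ}
    {w m w' m' : (Fin d → ℝ) → ℝ} {H H' : ℝ} (hV : Continuous (V x)) (hs : CellSolAt V x Λ w m H)
    (hs' : CellSolAt V x Λ' w' m' H')
    (κ : ℝ) (hκ0 : 0 ≤ κ) (hκ : ∀ y, κ ≤ m y) :
    H + ((∑ i, qvec Λ w m i * (Λ' i - Λ i)) + κ / 2 * ∑ i, (Λ' i - Λ i)^2) ≤ H' := by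
  have := lower_gen hV hs hs'.1 hs'.2.1 Λ' κ hκ0 hκ
  rw [sol_int hs'] at this
  exact Real.exp_le_exp.1 this

lemma H_unique {d : ℕ} {V : (Fin d → ℝ) → (Fin d → ℝ) → ℝ} {x Λ : Fin d → ℝ}
    {w m w' m' : (Fin d → ℝ) → ℝ} {H H' : ℝ} (hV : Continuous (V x)) (hs : CellSolAt V x Λ w m H)
    (hs' : CellSolAt V x Λ w' m' H') : H = H' := by
  have h1 := lower_bd hV hs hs' 0 le_rfl (fun y => (hs.2.2.2.2.1 y).le)
  have h2 := lower_bd hV hs' hs 0 le_rfl (fun y => (hs'.2.2.2.2.1 y).le)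
  simp at h1 h2
  exact le_antisymm h1 h2

lemma upper_bd {d : ℕ} {V : (Fin d → ℝ) → (Fin d → ℝ) → ℝ} {x Λ Λ' : Fin d → ℝ}
    {w m w' m' : (Fin d → ℝ) → ℝ} {H H' : ℝ} (hV : Continuous (V x)) (hs : CellSolAt V x Λ w m H)
    (hs' : CellSolAt V x Λ' w' m' H') (c : Fin d → ℝ) (B : ℝ)
    (hB : ∀ y i, (Λ i + pder i w y - c i)^2 ≤ B)
    (hsmall : d * B * ∑ i, (Λ' i - Λ i)^2 ≤ 1) :
    H' ≤ H + ((∑ i, qvec Λ w m i * (Λ' i - Λ i)) + (1/2 + d * B) * ∑ i, (Λ' i - Λ i)^2) := by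
  have h0 := lower_gen hV hs' hs.1 hs.2.1 Λ' 0 le_rfl (fun y => (hs'.2.2.2.2.1 y).le)
  have hs0 := hs
  obtain ⟨hw, hwp, hm, hmp, hmpos, he, hdiv, hone⟩ := hs
  have hw1 : ContDiff ℝ 1 w := hw.of_le (by norm_num)
  have cw := fun i => pder_cont hw1 i
  have cm := hm.continuous
  have cf' := ffun_cont (Λ := Λ') hV hw1
  simp only [sub_self, mul_zero, zero_div, zero_mul, Finset.sum_const_zero, add_zero] at h0
  set S := ∑ i, (Λ' i - Λ i)^2 with hS
  set u : (Fin d → ℝ) → ℝ := fun y => ∑ i, (Λ i + pder i w y - c i) * (Λ' i - Λ i) with hu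
  set C := ∑ i, c i * (Λ' i - Λ i) with hC
  have cu : Continuous u := by fun_prop
  have hu2 : ∀ y, u y ^ 2 ≤ d * B * S := by
    intro y
    refine (Finset.sum_mul_sq_le_sq_mul_sq _ _ _).trans ?_
    refine mul_le_mul_of_nonneg_right ?_ (Finset.sum_nonneg fun i _ => sq_nonneg _)
    refine (Finset.sum_le_sum fun i _ => hB y i).trans ?_
    simp
  have hf : ∀ y, ffun V x Λ' w y = ffun V x Λ w y + (u y + (C + S/2)) := by
    intro y
    simp only [ffun, hu, hC, hS, Finset.sum_div]
    rw [add_assoc, add_comm (V x y), ← add_assoc, ← add_assoc, add_left_inj, ← Finset.sum_add_distrib, ← add_assoc, ← Finset.sum_add_distrib, ← Finset.sum_add_distrib]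
    refine Finset.sum_congr rfl fun i _ => ?_
    ring
  have hpt : ∀ y, Real.exp (ffun V x Λ' w y) ≤ Real.exp (H + (C + S/2)) * (m y * (1 + d * B * S) + m y * u y) := by
    intro y
    rw [hf, Real.exp_add, sol_m hs0, Real.exp_add (u y), Real.exp_add H]
    have h1 : Real.exp (u y) ≤ 1 + u y + u y ^ 2 := by
      have h3 : |u y| ≤ 1 := by
        rw [← abs_one, ← sq_le_sq]; linarith [hu2 y]
      have := Real.abs_exp_sub_one_sub_id_le h3
      linarith [(abs_le.1 this).2]
    have h2 : Real.exp (u y) ≤ 1 + d * B * S + u y := by linarith [hu2 y]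
    have h3 := mul_le_mul_of_nonneg_left h2 (mul_pos (mul_pos (Real.exp_pos H) (Real.exp_pos (C + S/2))) (hmpos y)).le
    linarith
  have hmono := integral_mono (μ := volume.restrict (cube d)) (cube_integrable (by fun_prop)) (cube_integrable (by fun_prop)) hpt
  set Q := ∑ i, qvec Λ w m i * (Λ' i - Λ i) with hQ
  have hmu : (∫ y in cube d, m y * u y) = Q - C := by
    have e1 : ∀ y, m y * u y = (∑ i, m y * (Λ i + pder i w y) * (Λ' i - Λ i)) - m y * C := by
      intro y
      simp only [hu, hC, Finset.mul_sum]
      rw [← Finset.sum_sub_distrib]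
      exact Finset.sum_congr rfl fun i _ => by ring
    simp only [e1]
    rw [integral_sub, integral_finsetSum, integral_mul_const, hone, one_mul]
    · simp only [integral_mul_const, hQ, qvec]
    · intro i _; exact cube_integrable (by fun_prop)
    · exact cube_integrable (by fun_prop)
    · exact cube_integrable (by fun_prop)
  rw [integral_const_mul, integral_add, integral_mul_const, hone, hmu, one_mul] at hmono
  · have h3 : Real.exp H' ≤ Real.exp (H + (C + S/2)) * Real.exp (d * B * S + (Q - C)) := by
      refine (h0.trans hmono).trans (mul_le_mul_of_nonneg_left ?_ (Real.exp_pos _).le)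
      linarith [Real.add_one_le_exp (d * B * S + (Q - C))]
    rw [← Real.exp_add] at h3
    have := Real.exp_le_exp.1 h3
    linarith
  · exact cube_integrable (by fun_prop)
  · exact cube_integrable (by fun_prop)

lemma W_exists (p : ℝ → ℝ) (hp : ContDiff ℝ 1 p) (hper : ∀ (t : ℝ) (k : ℤ), p (t + k) = p t)
    (h0 : (∫ t in (0:ℝ)..1, p t) = 0) :
    ∃ W : ℝ → ℝ, ContDiff ℝ 2 W ∧ (∀ (t : ℝ) (k : ℤ), W (t + k) = W t) ∧ ∀ t, HasDerivAt W (p t) t := by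
  have hc := hp.continuous
  have hd : ∀ t, HasDerivAt (fun t => ∫ s in (0:ℝ)..t, p s) (p t) t := fun t =>
    intervalIntegral.integral_hasDerivAt_right (hc.intervalIntegrable _ _)
      (hc.stronglyMeasurableAtFilter _ _) hc.continuousAt
  refine ⟨fun t => ∫ s in (0:ℝ)..t, p s, ?_, ?_, hd⟩
  · rw [show (2 : WithTop ℕ∞) = 1 + 1 by norm_num, contDiff_succ_iff_deriv]
    refine ⟨fun t => (hd t).differentiableAt, by simp, ?_⟩
    rw [show deriv (fun t => ∫ s in (0:ℝ)..t, p s) = p from funext fun t => (hd t).deriv]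
    exact hp
  · intro t k
    have hP : Function.Periodic p 1 := fun t => by simpa using hper t 1
    have h1 := hP.intervalIntegral_add_zsmul_eq k t (fun a b => hc.intervalIntegrable a b)
    have h2 := intervalIntegral.integral_add_adjacent_intervals
      (hc.intervalIntegrable (μ := volume) 0 t) (hc.intervalIntegrable (μ := volume) t (t + k))
    have h3 := hP.intervalIntegral_add_eq t 0
    simp only [zsmul_eq_mul, mul_one, zero_add] at h1 h3
    show (∫ s in (0:ℝ)..(t + k), p s) = ∫ s in (0:ℝ)..t, p s
    rw [← h2, h1, h3, h0]; simp

lemma prod_sol {d : ℕ} (V : (Fin d → ℝ) → (Fin d → ℝ) → ℝ) (x : Fin d → ℝ) (v : Fin d → ℝ → ℝ)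
    (hv : ∀ i, ContDiff ℝ 1 (v i)) (hper : ∀ i (t : ℝ) (k : ℤ), v i (t + k) = v i t)
    (M : ℝ) (hM : ∀ i t, |v i t| ≤ M) (hVx : ∀ y, V x y = ∑ i, v i (y i)) (Λ : Fin d → ℝ) :
    ∃ (w m : (Fin d → ℝ) → ℝ) (H : ℝ) (c : Fin d → ℝ), CellSolAt V x Λ w m H ∧
      (∀ y, Real.exp (-(2 * M * d)) ≤ m y) ∧ ∀ y i, (Λ i + pder i w y - c i)^2 ≤ 8 * M := by
  choose c H r hr hrp hre hri hrl hrb hcb using fun i => sol1 (v i) (hv i) (hper i) M (hM i) (Λ i)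
  have hW := fun i => W_exists (fun t => c i * Real.exp (r i t) - Λ i)
    ((contDiff_const.mul (hr i).exp).sub contDiff_const) (fun t k => by simp only [hrp]) (by
      have := (hr i).continuous
      rw [intervalIntegral.integral_sub, hrl]
      · simp
      · exact Continuous.intervalIntegrable (by fun_prop) _ _
      · simp)
  choose W hW2 hWp hWd using hW
  have hpd : ∀ i y, pder i (fun y : Fin d → ℝ => ∑ j, W j (y j)) y = c i * Real.exp (r i (y i)) - Λ i := by
    intro i y
    have h : HasFDerivAt (fun y : Fin d → ℝ => ∑ j, W j (y j))
        (∑ j, (c j * Real.exp (r j (y j)) - Λ j) • ContinuousLinearMap.proj (R := ℝ) (φ := fun _ : Fin d => ℝ) j) y := by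
      refine HasFDerivAt.fun_sum fun j _ => ?_
      exact (hWd j (y j)).comp_hasFDerivAt y (ContinuousLinearMap.proj (R := ℝ) (φ := fun _ : Fin d => ℝ) j).hasFDerivAt
    rw [pder, h.fderiv]
    simp only [ContinuousLinearMap.sum_apply, ContinuousLinearMap.smul_apply, ContinuousLinearMap.proj_apply, smul_eq_mul]
    rw [Finset.sum_eq_single i]
    · simp
    · intro j _ hj; simp [hj]
    · simp
  have hcr : ∀ i, ContDiff ℝ 1 (fun y : Fin d → ℝ => r i (y i)) := fun i =>
    (hr i).comp (contDiff_apply ℝ ℝ i)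
  have hm1 : ContDiff ℝ 1 (fun y : Fin d → ℝ => Real.exp (-∑ i, r i (y i))) :=
    (ContDiff.sum fun i _ => hcr i).neg.exp
  refine ⟨fun y => ∑ i, W i (y i), fun y => Real.exp (-∑ i, r i (y i)), ∑ i, H i, c,
    ⟨?_, ?_, hm1, ?_, fun y => Real.exp_pos _, ?_, ?_, ?_⟩, ?_, ?_⟩
  · exact ContDiff.sum fun i _ => (hW2 i).comp (contDiff_apply ℝ ℝ i)
  · intro y k; simp only [hWp]
  · intro y k; simp only [hrp]
  · intro y
    simp only [hpd, Real.log_exp, hVx]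
    rw [Finset.sum_div, ← Finset.sum_neg_distrib, ← Finset.sum_add_distrib, ← Finset.sum_add_distrib]
    refine Finset.sum_congr rfl fun i _ => ?_
    have h1 := hre i (y i)
    have h5 : Real.exp (2 * r i (y i)) = Real.exp (r i (y i)) ^ 2 := by
      rw [← Real.exp_nat_mul]; norm_num
    rw [h5] at h1
    linear_combination h1
  · intro y
    refine Finset.sum_eq_zero fun i _ => ?_
    simp only [hpd, add_sub_cancel]
    have hdiff : DifferentiableAt ℝ (fun z : Fin d → ℝ => Real.exp (-∑ i, r i (z i)) * (c i * Real.exp (r i (z i)))) y :=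
      ((hm1.mul (contDiff_const.mul (hcr i).exp)).differentiable (by norm_num)) y
    rw [pder, ← hdiff.lineDeriv_eq_fderiv, lineDeriv]
    have : ∀ z : Fin d → ℝ, Real.exp (-∑ i, r i (z i)) * (c i * Real.exp (r i (z i)))
        = c i * Real.exp (-∑ j ∈ Finset.univ.erase i, r j (z j)) := by
      intro z
      rw [← Finset.add_sum_erase _ _ (Finset.mem_univ i), mul_left_comm, ← Real.exp_add]
      congr 2; ring
    simp only [this]
    have hconst : (fun t : ℝ => c i * Real.exp (-∑ j ∈ Finset.univ.erase i, r j ((y + t • (Pi.single i (1:ℝ) : Fin d → ℝ)) j)))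
       = fun _ => c i * Real.exp (-∑ j ∈ Finset.univ.erase i, r j (y j)) := by
      ext t
      congr 3
      refine Finset.sum_congr rfl fun j hj => ?_
      have := Finset.ne_of_mem_erase hj
      simp [this]
    rw [hconst, deriv_const]
  · simp only [← Finset.sum_neg_distrib, Real.exp_sum]
    rw [cube, volume_pi, Measure.restrict_pi_pi, integral_fintype_prod_eq_prod (fun i t => Real.exp (- r i t))]
    refine Finset.prod_eq_one fun i _ => ?_
    rw [integral_Ico_eq_integral_Ioc, ← intervalIntegral.integral_of_le zero_le_one, hri]
  · intro y
    refine Real.exp_le_exp.2 (neg_le_neg ?_)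
    calc (∑ i, r i (y i)) ≤ ∑ _i : Fin d, 2 * M :=
          Finset.sum_le_sum fun i _ => (le_abs_self _).trans (hrb i _)
      _ = 2 * M * d := by simp [mul_comm]
  · intro y i
    simp only [hpd, add_sub_cancel]
    exact hcb i _

lemma second_der {g g' : ℝ → ℝ} {g2 l a : ℝ} (h1 : ∀ t, HasDerivAt g (g' t) t)
    (h2 : HasDerivAt g' g2 0) (hle : ∀ᶠ t in 𝓝 (0:ℝ), g 0 + l * t + a * t^2 ≤ g t) : 2 * a ≤ g2 := by
  by_contra hlt
  push Not at hlt
  set F : ℝ → ℝ := fun t => g t - (g 0 + l * t + a * t^2) with hF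
  have hF1 : ∀ t, HasDerivAt F (g' t - (l + a * (2 * t))) t := by
    intro t
    have ha : HasDerivAt (fun t : ℝ => g 0 + l * t + a * t^2) (l + a * (2 * t)) t := by
      have := (((hasDerivAt_id t).const_mul l).const_add (g 0)).fun_add (((hasDerivAt_id t).fun_pow 2).const_mul a)
      simpa using this
    exact (h1 t).fun_sub ha
  have hdF : deriv F = fun t => g' t - (l + a * (2 * t)) := funext fun t => (hF1 t).deriv
  have hF2 : HasDerivAt (deriv F) (g2 - 2 * a) 0 := by
    rw [hdF]
    have ha : HasDerivAt (fun t : ℝ => l + a * (2 * t)) (2 * a) 0 := by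
      have := (((hasDerivAt_id (0:ℝ)).const_mul 2).const_mul a).const_add l
      simpa [mul_comm] using this
    exact h2.fun_sub ha
  have hF0 : F 0 = 0 := by simp [hF]
  have hmin : IsLocalMin F 0 := by
    filter_upwards [hle] with t ht
    rw [hF0]; simp only [hF]; linarith
  have hd0 : deriv F 0 = 0 := hmin.deriv_eq_zero
  have hmax : IsLocalMax F 0 := isLocalMax_of_deriv_deriv_neg (by rw [hF2.deriv]; linarith) hd0 (hF1 0).continuousAt
  have hz : F =ᶠ[𝓝 0] fun _ => (0:ℝ) := by
    filter_upwards [hmin, hmax] with t h1 h2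
    rw [hF0] at h1 h2
    exact le_antisymm h2 h1
  have hz' := hz.deriv
  have hz2 := hz'.deriv_eq
  rw [hF2.deriv] at hz2
  simp at hz2
  linarith

/-- the second derivative as a bilinear map -/
def D2 {d : ℕ} (f : (Fin d → ℝ) → ℝ) (z : Fin d → ℝ) : (Fin d → ℝ) →L[ℝ] (Fin d → ℝ) →L[ℝ] ℝ :=
  fderiv ℝ (fderiv ℝ f) z

lemma pder2_eq {d : ℕ} {f : (Fin d → ℝ) → ℝ} (hf : ContDiff ℝ 2 f) (z : Fin d → ℝ) (j l : Fin d) :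
    pder l (fun z => pder j f z) z = D2 f z (Pi.single l 1) (Pi.single j 1) := by
  have h1 : DifferentiableAt ℝ (fderiv ℝ f) z :=
    (hf.fderiv_right (m := 1) (by norm_num)).differentiable (by norm_num) z
  unfold pder D2
  rw [fderiv_clm_apply h1 (differentiableAt_const _)]
  simp

lemma D2_sum {d : ℕ} {f : (Fin d → ℝ) → ℝ} (hf : ContDiff ℝ 2 f) (z ξ : Fin d → ℝ) :
    (∑ j, ∑ l, ξ j * pder l (fun z => pder j f z) z * ξ l) = D2 f z ξ ξ := by
  have hξ : ξ = ∑ i, ξ i • (Pi.single i (1:ℝ) : Fin d → ℝ) := pi_eq_sum_univ' ξ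
  have h1 : ∀ (A : (Fin d → ℝ) →L[ℝ] ℝ), A ξ = ∑ i, ξ i * A (Pi.single i 1) := by
    intro A
    conv_lhs => rw [hξ]
    simp [map_sum]
  have h2 : D2 f z ξ = ∑ i, ξ i • D2 f z (Pi.single i 1) := by
    conv_lhs => rw [hξ]
    simp [map_sum]
  rw [h1, h2]
  refine Finset.sum_congr rfl fun j _ => ?_
  simp only [ContinuousLinearMap.sum_apply, ContinuousLinearMap.smul_apply, smul_eq_mul, Finset.mul_sum]
  refine Finset.sum_congr rfl fun l _ => ?_
  rw [pder2_eq hf]; ring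

lemma D2_symm {d : ℕ} {f : (Fin d → ℝ) → ℝ} (hf : ContDiff ℝ 2 f) (z a b : Fin d → ℝ) :
    D2 f z a b = D2 f z b a :=
  (hf.contDiffAt.isSymmSndFDerivAt (by simp)).eq a b

lemma D2_bounds {d : ℕ} {f : (Fin d → ℝ) → ℝ} (hf : ContDiff ℝ 2 f) (z : Fin d → ℝ)
    (q : Fin d → ℝ) (a K δ : ℝ) (hδ : 0 < δ)
    (hlo : ∀ z', f z + ((∑ i, q i * (z' i - z i)) + a * ∑ i, (z' i - z i)^2) ≤ f z')
    (hup : ∀ z', (∑ i, (z' i - z i)^2) ≤ δ →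
      f z' ≤ f z + ((∑ i, q i * (z' i - z i)) + K * ∑ i, (z' i - z i)^2)) (ξ : Fin d → ℝ) :
    2 * a * (∑ i, ξ i ^ 2) ≤ D2 f z ξ ξ ∧ D2 f z ξ ξ ≤ 2 * K * (∑ i, ξ i ^ 2) := by
  have hf1 : Differentiable ℝ f := hf.differentiable (by norm_num)
  have hf2 : Differentiable ℝ (fderiv ℝ f) :=
    (hf.fderiv_right (m := 1) (by norm_num)).differentiable (by norm_num)
  have hline : ∀ t : ℝ, HasDerivAt (fun t : ℝ => z + t • ξ) ξ t := by
    intro t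
    simpa using ((hasDerivAt_id t).smul_const ξ).const_add z
  have h1 : ∀ t : ℝ, HasDerivAt (fun t : ℝ => f (z + t • ξ)) (fderiv ℝ f (z + t • ξ) ξ) t := fun t =>
    (hf1 _).hasFDerivAt.comp_hasDerivAt t (hline t)
  have h2 : HasDerivAt (fun t : ℝ => fderiv ℝ f (z + t • ξ) ξ) (D2 f z ξ ξ) 0 := by
    have h3 : HasDerivAt (fun t : ℝ => fderiv ℝ f (z + t • ξ)) (fderiv ℝ (fderiv ℝ f) (z + (0:ℝ) • ξ) ξ) 0 :=
      (hf2 _).hasFDerivAt.comp_hasDerivAt (0:ℝ) (hline 0)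
    have := h3.clm_apply (hasDerivAt_const (0:ℝ) ξ)
    simpa [D2] using this
  have e1 : ∀ t : ℝ, (∑ i, q i * ((z + t • ξ) i - z i)) = (∑ i, q i * ξ i) * t := by
    intro t
    rw [Finset.sum_mul]
    exact Finset.sum_congr rfl fun i _ => by simp; ring
  have e2 : ∀ t : ℝ, (∑ i, ((z + t • ξ) i - z i)^2) = (∑ i, ξ i ^ 2) * t^2 := by
    intro t
    rw [Finset.sum_mul]
    exact Finset.sum_congr rfl fun i _ => by simp; ring
  constructor
  · have := second_der (a := a * ∑ i, ξ i ^ 2) (l := ∑ i, q i * ξ i) h1 h2 (Eventually.of_forall fun t => by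
      have := hlo (z + t • ξ)
      rw [e1, e2] at this
      simp only [zero_smul, add_zero]
      linarith)
    linarith
  · have hev : ∀ᶠ t in 𝓝 (0:ℝ), (∑ i, ξ i ^ 2) * t^2 < δ := by
      have hc : Continuous fun t : ℝ => (∑ i, ξ i ^ 2) * t^2 := by fun_prop
      exact hc.continuousAt.eventually (gt_mem_nhds (by simpa using hδ))
    have := second_der (a := -(K * ∑ i, ξ i ^ 2)) (l := -∑ i, q i * ξ i) (fun t => (h1 t).fun_neg) h2.fun_neg (by
      filter_upwards [hev] with t ht
      have := hup (z + t • ξ) (by rw [e2]; exact ht.le)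
      rw [e1, e2] at this
      simp only [zero_smul, add_zero]
      linarith)
    linarith

lemma D2_entry {d : ℕ} {f : (Fin d → ℝ) → ℝ} (hf : ContDiff ℝ 2 f) (z : Fin d → ℝ) (A : ℝ) (hA : 0 ≤ A)
    (h : ∀ ξ : Fin d → ℝ, 0 ≤ D2 f z ξ ξ ∧ D2 f z ξ ξ ≤ A * ∑ i, ξ i ^ 2) (j l : Fin d) :
    |D2 f z (Pi.single l 1) (Pi.single j 1)| ≤ 3 * A := by
  have hn : ∀ i : Fin d, (∑ k, (Pi.single i (1:ℝ) : Fin d → ℝ) k ^ 2) = 1 := by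
    intro i
    rw [Finset.sum_eq_single i]
    · simp
    · intro k _ hk; simp [hk]
    · simp
  have hj := h (Pi.single j 1)
  have hl := h (Pi.single l 1)
  have hjl := h (Pi.single j 1 + Pi.single l 1)
  have hb : (∑ k, (Pi.single j (1:ℝ) + Pi.single l (1:ℝ) : Fin d → ℝ) k ^ 2) ≤ 4 := by
    calc _ ≤ ∑ k, (2 * (Pi.single j (1:ℝ) : Fin d → ℝ) k ^ 2 + 2 * (Pi.single l (1:ℝ) : Fin d → ℝ) k ^ 2) := by
          refine Finset.sum_le_sum fun k _ => ?_
          simp only [Pi.add_apply]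
          nlinarith [sq_nonneg ((Pi.single j (1:ℝ) : Fin d → ℝ) k - (Pi.single l (1:ℝ) : Fin d → ℝ) k)]
      _ = 4 := by rw [Finset.sum_add_distrib, ← Finset.mul_sum, ← Finset.mul_sum, hn, hn]; norm_num
  rw [hn] at hj hl
  have hb' := mul_le_mul_of_nonneg_left hb hA
  have he : D2 f z (Pi.single j 1 + Pi.single l 1) (Pi.single j 1 + Pi.single l 1)
    = D2 f z (Pi.single j 1) (Pi.single j 1) + D2 f z (Pi.single l 1) (Pi.single l 1)
      + 2 * D2 f z (Pi.single l 1) (Pi.single j 1) := by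
    simp only [map_add, ContinuousLinearMap.add_apply]
    rw [D2_symm hf z (Pi.single j 1) (Pi.single l 1)]
    ring
  rw [he] at hjl
  rw [abs_le]
  constructor <;> linarith [hj.1, hj.2, hl.1, hl.2, hjl.1, hjl.2]

lemma vi_bound {d : ℕ} (u : (Fin d → ℝ) → ℝ → ℝ) (hu : Continuous (uncurry u))
    (hx : ∀ t, ZPer fun x => u x t) (ht : ∀ x (t : ℝ) (k : ℤ), u x (t + k) = u x t) :
    ∃ M, ∀ x t, |u x t| ≤ M := by
  have hK : IsCompact ((Set.Icc (0 : Fin d → ℝ) 1) ×ˢ (Set.Icc (0:ℝ) 1)) := isCompact_Icc.prod isCompact_Icc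
  obtain ⟨M, hM⟩ := hK.exists_bound_of_continuousOn hu.continuousOn
  refine ⟨M, fun x t => ?_⟩
  have h1 : u x t = u (fun i => Int.fract (x i)) (Int.fract t) := by
    have a1 := ht x t (-⌊t⌋)
    have a2 := hx (Int.fract t) x (fun i => -⌊x i⌋)
    simp only [Int.cast_neg, ← sub_eq_add_neg, Int.self_sub_floor] at a1 a2
    rw [a2, a1]
  rw [h1]
  exact hM (fun i => Int.fract (x i), Int.fract t)
    ⟨⟨fun i => Int.fract_nonneg _, fun i => (Int.fract_lt_one _).le⟩, Int.fract_nonneg _, (Int.fract_lt_one _).le⟩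

lemma sep_all {d : ℕ} (hd : d ≠ 0) {V : (Fin d → ℝ) → (Fin d → ℝ) → ℝ} (hV : SmoothV V)
    (hsep : 1 < d → SeparableV V) : SeparableV V := by
  by_cases h : 1 < d
  · exact hsep h
  · obtain rfl : d = 1 := by omega
    refine ⟨fun _ x t => V x (fun _ => t), fun _ => ?_, fun _ t => hV.2.1 _, fun x y => ?_⟩
    · exact hV.1.comp (contDiff_fst.prodMk (contDiff_pi.2 fun _ => contDiff_snd))
    · simp only [Finset.univ_unique, Finset.sum_singleton]
      congr 1
      ext i
      rw [Subsingleton.elim i default]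

/-- uniform convexity of `H̃` in `Λ` (`ξᵀ D²_Λ H̃ ξ ≥ C|ξ|²`) and uniform
boundedness of the second `Λ`-derivatives, for cell-problem solutions depending smoothly
on `(x,Λ)`; for `d > 1`, `V` is assumed separable in `y`. -/
theorem stmt18 {d : ℕ} (V : (Fin d → ℝ) → (Fin d → ℝ) → ℝ) (hV : SmoothV V)
    (hsep : 1 < d → SeparableV V)
    (w m : (Fin d → ℝ) → (Fin d → ℝ) → (Fin d → ℝ) → ℝ)
    (H : (Fin d → ℝ) → (Fin d → ℝ) → ℝ)
    (hsol : ∀ x Λ, CellSolAt V x Λ (w x Λ) (m x Λ) (H x Λ))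
    (hws : ∀ y, ContDiff ℝ (⊤ : ℕ∞) fun q : (Fin d → ℝ) × (Fin d → ℝ) => w q.1 q.2 y)
    (hms : ∀ y, ContDiff ℝ (⊤ : ℕ∞) fun q : (Fin d → ℝ) × (Fin d → ℝ) => m q.1 q.2 y)
    (hHs : ContDiff ℝ (⊤ : ℕ∞) (uncurry H)) :
    (∃ C > 0, ∀ (x Λ ξ : Fin d → ℝ),
      C * (∑ j, (ξ j) ^ 2) ≤
        ∑ j, ∑ l, ξ j * pder l (fun Λ' => pder j (fun Λ'' => H x Λ'') Λ') Λ * ξ l) ∧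
    (∃ C' > 0, ∀ (x Λ : Fin d → ℝ) (j l : Fin d),
      |pder l (fun Λ' => pder j (fun Λ'' => H x Λ'') Λ') Λ| ≤ C') := by
  by_cases hd : d = 0
  · subst hd
    exact ⟨⟨1, one_pos, fun x Λ ξ => by simp⟩, ⟨1, one_pos, fun x Λ j => j.elim0⟩⟩
  obtain ⟨Vi, hVi, hVix, hVs⟩ := sep_all hd hV hsep
  have hViy : ∀ i x (t : ℝ) (k : ℤ), Vi i x (t + k) = Vi i x t := by
    intro i x t k
    have h := hV.2.2 x (fun _ => t) (Pi.single i k)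
    simp only [hVs] at h
    rw [← Finset.add_sum_erase _ _ (Finset.mem_univ i), ← Finset.add_sum_erase Finset.univ (fun j => Vi j x t) (Finset.mem_univ i)] at h
    have h2 : (∑ j ∈ Finset.univ.erase i, Vi j x (t + ((Pi.single i k : Fin d → ℤ) j : ℝ)))
        = ∑ j ∈ Finset.univ.erase i, Vi j x t := by
      refine Finset.sum_congr rfl fun j hj => ?_
      simp [Finset.ne_of_mem_erase hj]
    rw [h2] at h
    simpa only [Pi.single_eq_same, add_left_inj] using h
  choose Mi hMi using fun i => vi_bound (Vi i) (hVi i).continuous (hVix i) (hViy i)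
  set M := ∑ i, |Mi i| with hMdef
  have hM0 : 0 ≤ M := Finset.sum_nonneg fun i _ => abs_nonneg _
  have hM : ∀ i x t, |Vi i x t| ≤ M := fun i x t =>
    ((hMi i x t).trans (le_abs_self _)).trans
      (Finset.single_le_sum (f := fun i => |Mi i|) (fun i _ => abs_nonneg _) (Finset.mem_univ i))
  have hVc : ∀ x, Continuous (V x) := fun x => hV.1.continuous.comp (Continuous.prodMk_right x)
  have hH2 : ∀ x, ContDiff ℝ 2 (H x) := fun x =>
    contDiff_infty.1 (hHs.comp (contDiff_prodMk_right x)) 2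
  have hmain : ∀ x Λ ξ, Real.exp (-(2 * M * d)) * (∑ i, ξ i ^ 2) ≤ D2 (H x) Λ ξ ξ ∧
      D2 (H x) Λ ξ ξ ≤ (1 + 16 * (d * M)) * (∑ i, ξ i ^ 2) := by
    intro x Λ ξ
    obtain ⟨w₀, m₀, H₀, c, hs, hm, hp⟩ := prod_sol V x (fun i => Vi i x)
      (fun i => ((hVi i).comp (contDiff_prodMk_right x)).of_le (by exact_mod_cast le_top))
      (fun i => hViy i x) M (fun i => hM i x) (hVs x) Λ
    have hHeq : H₀ = H x Λ := H_unique (hVc x) hs (hsol x Λ)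
    have hpos : 0 < d * (8 * M) + 1 := by positivity
    have := D2_bounds (hH2 x) Λ (qvec Λ w₀ m₀) (Real.exp (-(2 * M * d)) / 2) (1/2 + d * (8 * M))
      (1 / (d * (8 * M) + 1)) (by positivity)
      (fun Λ' => by
        have := lower_bd (hVc x) hs (hsol x Λ') _ (Real.exp_pos _).le hm
        rwa [hHeq] at this)
      (fun Λ' hΛ' => by
        have := upper_bd (hVc x) hs (hsol x Λ') c (8 * M) hp (by
          rw [le_div_iff₀ hpos] at hΛ'
          have : 0 ≤ ∑ i, (Λ' i - Λ i)^2 := Finset.sum_nonneg fun i _ => sq_nonneg _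
          linarith)
        rwa [hHeq] at this) ξ
    constructor <;> linarith [this.1, this.2]
  refine ⟨⟨Real.exp (-(2 * M * d)), Real.exp_pos _, fun x Λ ξ => ?_⟩,
    ⟨3 * (1 + 16 * (d * M)), by positivity, fun x Λ j l => ?_⟩⟩
  · rw [D2_sum (hH2 x)]
    exact (hmain x Λ ξ).1
  · rw [pder2_eq (hH2 x)]
    refine D2_entry (hH2 x) Λ _ (by positivity) (fun ξ => ⟨?_, (hmain x Λ ξ).2⟩) j l
    refine le_trans ?_ (hmain x Λ ξ).1
    have : 0 ≤ ∑ i, ξ i ^ 2 := Finset.sum_nonneg fun i _ => sq_nonneg _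
    positivity
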